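/- Let γ_{n+1} be the standard Gaussian measure on ℝ^{n+1} and define d_γ(K,L) := γ_{n+1}(K Δ L). Then: (i) d_γ is a metric on the family K^{n+1}_+ of closed convex subsets of ℝ^{n+1} with nonempty interior whose orthogonal projection onto H = e_{n+1}^⊥ is a compact convex set with nonempty interior; (ii) for compact convex bodies K_m, K ⊂ ℝ^{n+1} with nonempty interior, d_γ(K_m, K) → 0 if and only if K_m → K in the Hausdorff metric; (iii) for u_m, u ∈ Conv_cd(ℝⁿ) with epigraphs in K^{n+1}_+, d_γ(epi(u_m), epi(u)) → 0 if and only if u_m epi-converges to u. -/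

import Mathlib

open MeasureTheory Metric Set Filter
open scoped RealInnerProductSpace Pointwise Topology NNReal ENNReal

noncomputable section

namespace PaperJU

open Classical

/-- Euclidean space ℝⁿ. -/
abbrev E (n : ℕ) := EuclideanSpace ℝ (Fin n)

variable {n : ℕ}

/-- The pairing (x, z) ∈ ℝⁿ × ℝ ↦ ℝ^{n+1}. -/
def pairE (x : E n) (z : ℝ) : E (n + 1) :=
  (EuclideanSpace.equiv (Fin (n + 1)) ℝ).symm (Fin.snoc (EuclideanSpace.equiv (Fin n) ℝ x) z)

/-- Orthogonal projection onto H = e_{n+1}^⊥ ≅ ℝⁿ. -/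
def fstE (X : E (n + 1)) : E n :=
  (EuclideanSpace.equiv (Fin n) ℝ).symm (Fin.init (EuclideanSpace.equiv (Fin (n + 1)) ℝ X))

/-- The last coordinate of X ∈ ℝ^{n+1}. -/
def sndE (X : E (n + 1)) : ℝ := X (Fin.last n)

/-- Reflection across H = e_{n+1}^⊥. -/
def reflH (X : E (n + 1)) : E (n + 1) := pairE (fstE X) (-(sndE X))

/-- Epigraph of u, as a subset of ℝⁿ × ℝ. -/
def epi (u : E n → EReal) : Set (E n × ℝ) := {p | u p.1 ≤ (p.2 : EReal)}

/-- Epigraph of u, as a subset of ℝ^{n+1}. -/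
def epiF (u : E n → EReal) : Set (E (n + 1)) := {X | u (fstE X) ≤ ((sndE X : ℝ) : EReal)}

/-- Effective domain of u. -/
def dom (u : E n → EReal) : Set (E n) := {x | u x ≠ ⊤}

/-- u ∈ Conv(ℝⁿ): convex (epigraph convex), lower semicontinuous, proper, never -∞. -/
structure IsConvFn (u : E n → EReal) : Prop where
  convex_epi : Convex ℝ (epi u)
  lsc : LowerSemicontinuous u
  ne_bot : ∀ x, u x ≠ ⊥
  exists_ne_top : ∃ x, u x ≠ ⊤

/-- u ∈ Conv_cd(ℝⁿ): convex with compact domain. -/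
def IsConvCd (u : E n → EReal) : Prop := IsConvFn u ∧ IsCompact (dom u)

/-- u ∈ Conv_coe(ℝⁿ): convex and coercive. -/
def IsConvCoe (u : E n → EReal) : Prop :=
  IsConvFn u ∧ Tendsto u (cocompact (E n)) (𝓝 (⊤ : EReal))

/-- Fenchel–Legendre transform of an extended-real-valued function. -/
def legendre (u : E n → EReal) (y : E n) : EReal :=
  ⨆ x : E n, ((⟪x, y⟫ : ℝ) : EReal) - u x

/-- Real-valued Fenchel–Legendre transform (when finite). -/
def legendreR (u : E n → EReal) (y : E n) : ℝ := (legendre u y).toReal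

/-- Fenchel–Legendre transform of a real-valued function. -/
def conjR (f : E n → ℝ) (x : E n) : EReal := ⨆ y : E n, ((⟪x, y⟫ - f y : ℝ) : EReal)

/-- The perturbation u_t = (u* + tζ)*. -/
def pert (u : E n → EReal) (ζ : E n → ℝ) (t : ℝ) : E n → EReal :=
  conjR fun y => legendreR u y + t * ζ y

/-- e^{-a} for a ∈ ℝ ∪ {±∞}, with e^{-(+∞)} = 0. -/
def expNeg (a : EReal) : ℝ := if a = ⊤ then 0 else Real.exp (-a.toReal)

/-- The functional volume μ_n(u) = ∫ e^{-u}. -/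
def muN (u : E n → EReal) : ℝ := ∫ x : E n, expNeg (u x)

/-- The q-th dual functional volume μ_q(u) = ∫ e^{-u(x)} |x|^{q-n} dx. -/
def muQ (q : ℝ) (u : E n → EReal) : ℝ := ∫ x : E n, expNeg (u x) * ‖x‖ ^ (q - (n : ℝ))

/-- The gradient ∇u, computed through the real-valued representative of u. -/
def grad (u : E n → EReal) (x : E n) : E n := gradient (fun y => (u y).toReal) x

/-- ν is an outer unit normal vector to K at the boundary point y. -/
def IsOuterNormalAt (K : Set (E n)) (ν y : E n) : Prop :=
  ‖ν‖ = 1 ∧ ∀ x ∈ K, (⟪x, ν⟫ : ℝ) ≤ ⟪y, ν⟫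

/-- Support function of a set. -/
def suppFn (K : Set (E n)) (x : E n) : ℝ := (⨆ y ∈ K, ((⟪y, x⟫ : ℝ) : EReal)).toReal

/-- Infimal convolution. -/
def infConv (u v : E n → EReal) (x : E n) : EReal := ⨅ y : E n, u y + v (x - y)

/-- Epi-multiplication t ⊡ v. -/
def epiMul (t : ℝ) (v : E n → EReal) : E n → EReal :=
  if t = 0 then fun x => if x = 0 then (0 : EReal) else ⊤
  else fun x => (t : EReal) * v (t⁻¹ • x)

/-- Convex indicator function of a set. -/
def indicatorE (A : Set (E n)) : E n → EReal := fun x => if x ∈ A then (0 : EReal) else ⊤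

/-- ζ ∈ C_rec(ℝⁿ), with (1-homogeneously extended) recession function ρ. -/
structure IsCRec (ζ ρ : E n → ℝ) : Prop where
  cont : Continuous ζ
  rec_cont : Continuous ρ
  rec_zero : ρ 0 = 0
  rec_homog : ∀ c : ℝ, 0 ≤ c → ∀ x, ρ (c • x) = c * ρ x
  rec_lim : ∀ ν : E n, ‖ν‖ = 1 → Tendsto (fun t : ℝ => ζ (t • ν) / t) atTop (𝓝 (ρ ν))
  diff_bdd : ∃ C : ℝ, ∀ x, |ρ x - ζ x| ≤ C

/-- Wulff shape of f : S^{n-1} → ℝ. -/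
def wulff (f : E n → ℝ) : Set (E n) := ⋂ ν ∈ sphere (0 : E n) 1, {x : E n | (⟪x, ν⟫ : ℝ) ≤ f ν}

/-- Lower boundary function ⌊K⌋ of a subset of ℝ^{n+1}. -/
def lfloor (K : Set (E (n + 1))) (x : E n) : EReal := ⨅ t ∈ {t : ℝ | pairE x t ∈ K}, (t : EReal)

/-- M_u, the maximum of u over its domain. -/
def maxVal (u : E n → EReal) : ℝ := sSup ((fun x => (u x).toReal) '' dom u)

/-- The body K^u = (epi(u - M_u) ∩ R_H(epi(u - M_u))) + M_u e_{n+1}. -/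
def Ku (u : E n → EReal) : Set (E (n + 1)) :=
  (fun X => X + pairE (0 : E n) (maxVal u)) ''
    ({X : E (n + 1) | u (fstE X) ≤ ((sndE X + maxVal u : ℝ) : EReal)} ∩
      reflH '' {X : E (n + 1) | u (fstE X) ≤ ((sndE X + maxVal u : ℝ) : EReal)})

/-- The vertical segment ℓ_s = {r e_{n+1} : r ∈ [0, s]}. -/
def segZ (n : ℕ) (s : ℝ) : Set (E (n + 1)) := (fun r : ℝ => pairE (0 : E n) r) '' Icc 0 s

/-- Gnomonic projection. -/
def gnom (ν : E (n + 1)) : E n := (sndE ν)⁻¹ • fstE ν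

/-- The function ζ̄ on Sⁿ built from ζ and its recession function ρ. -/
def zbar (ζ ρ : E n → ℝ) (ν : E (n + 1)) : ℝ :=
  if sndE ν < 0 then ζ (gnom ν) / Real.sqrt (1 + ‖gnom ν‖ ^ 2)
  else if 0 < sndE ν then ζ (gnom (reflH ν)) / Real.sqrt (1 + ‖gnom (reflH ν)‖ ^ 2)
  else ρ (fstE ν)

/-- Weighted surface area measure S_{μ,K}, realized via a choice of Gauss map N. -/
def surfMeas (w : E (n + 1) → ℝ) (K : Set (E (n + 1))) (N : E (n + 1) → E (n + 1)) :
    Measure (E (n + 1)) :=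
  Measure.map N (((μH[(n : ℝ)]).restrict (frontier K)).withDensity fun X => ENNReal.ofReal (w X))

/-- φ evaluated at a ∈ EReal (0 at +∞). -/
def phiE (φ : ℝ → ℝ) (a : EReal) : ℝ := if a = ⊤ then 0 else φ a.toReal

/-- Φ(a) = ∫_a^{+∞} φ(z) dz, extended by 0 at a = +∞. -/
def PhiE (φ : ℝ → ℝ) (a : EReal) : ℝ := if a = ⊤ then 0 else ∫ z in Ici a.toReal, φ z

/-- Standard Gaussian density on ℝ^m. -/
def gaussDensity (m : ℕ) (X : E m) : ℝ :=
  (2 * Real.pi) ^ (-(m : ℝ) / 2) * Real.exp (-(‖X‖ ^ 2 / 2))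

/-- Standard Gaussian measure on ℝ^m. -/
def gaussMeas (m : ℕ) : Measure (E m) :=
  volume.withDensity fun X => ENNReal.ofReal (gaussDensity m X)

/-- Gaussian symmetric-difference distance. -/
def dGauss {m : ℕ} (K L : Set (E m)) : ℝ := (gaussMeas m (symmDiff K L)).toReal

/-- The class K^{n+1}_+. -/
def KPlus (n : ℕ) : Set (Set (E (n + 1))) :=
  {K | Convex ℝ K ∧ IsClosed K ∧ (interior K).Nonempty ∧
    IsCompact (fstE '' K) ∧ Convex ℝ (fstE '' K) ∧ (interior (fstE '' K)).Nonempty}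

/-- Epi-convergence of a sequence of functions. -/
def EpiConverges (um : ℕ → E n → EReal) (u : E n → EReal) : Prop :=
  ∀ x : E n,
    (∀ xs : ℕ → E n, Tendsto xs atTop (𝓝 x) →
      u x ≤ Filter.liminf (fun m => um m (xs m)) atTop) ∧
    ∃ xs : ℕ → E n, Tendsto xs atTop (𝓝 x) ∧
      Tendsto (fun m => um m (xs m)) atTop (𝓝 (u x))


/-! ### Helper lemmas -/

/-- Painlevé–Kuratowski convergence of a sequence of sets to a closed set. -/
structure PKConv {k : ℕ} (Km : ℕ → Set (E k)) (K : Set (E k)) : Prop where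
  li : ∀ x ∈ K, ∀ ε > 0, ∀ᶠ m in atTop, ∃ y ∈ Km m, dist x y < ε
  ls : ∀ x, x ∉ K → ∃ U ∈ 𝓝 x, ∀ᶠ m in atTop, ∀ y ∈ U, y ∉ Km m

lemma gaussDensity_pos (k : ℕ) (X : E k) : 0 < gaussDensity k X := by
  unfold gaussDensity
  have := Real.pi_pos
  positivity

lemma continuous_gaussDensity (k : ℕ) : Continuous (gaussDensity k) := by
  unfold gaussDensity
  fun_prop

lemma integrable_gaussDensity (k : ℕ) : Integrable (gaussDensity k) := by
  have h := (GaussianFourier.integrable_cexp_neg_mul_sq_norm_add (V := E k) (b := (1 / 2 : ℂ))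
    (by norm_num) 0 0).norm
  have h2 : Integrable (fun X : E k => Real.exp (-(‖X‖ ^ 2 / 2))) := by
    refine h.congr (ae_of_all _ fun X => ?_)
    simp only [Complex.norm_exp]
    congr 1
    have : (-(1 / 2 : ℂ) * (‖X‖ : ℂ) ^ 2 + 0 * ((inner ℝ (0 : E k) X : ℝ) : ℂ))
        = ((-(‖X‖ ^ 2 / 2) : ℝ) : ℂ) := by
      push_cast; ring
    rw [this, Complex.ofReal_re]
  exact h2.const_mul _

instance isFiniteMeasure_gaussMeas (k : ℕ) : IsFiniteMeasure (gaussMeas k) :=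
  isFiniteMeasure_withDensity_ofReal (integrable_gaussDensity k).2

lemma gaussMeas_ac (k : ℕ) : gaussMeas k ≪ volume := withDensity_absolutelyContinuous _ _

lemma ac_gaussMeas (k : ℕ) : (volume : Measure (E k)) ≪ gaussMeas k := by
  refine withDensity_absolutelyContinuous' ?_ ?_
  · exact (continuous_gaussDensity k).measurable.ennreal_ofReal.aemeasurable
  · exact ae_of_all _ fun X => by simpa using gaussDensity_pos k X

lemma gaussMeas_pos {k : ℕ} {U : Set (E k)} (hU : IsOpen U) (hne : U.Nonempty) :
    0 < gaussMeas k U := by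
  rw [pos_iff_ne_zero]
  intro h
  exact (hU.measure_pos volume hne).ne' (ac_gaussMeas k h)

/-- uniformization over compact sets -/
lemma compact_eventually {k : ℕ} {K : Set (E k)} (hK : IsCompact K) {P : ℕ → E k → Prop}
    (h : ∀ x ∈ K, ∃ U ∈ 𝓝 x, ∀ᶠ m in atTop, ∀ y ∈ U, P m y) :
    ∀ᶠ m in atTop, ∀ y ∈ K, P m y := by
  choose! U hU hP using h
  obtain ⟨t, htK, ht⟩ := hK.elim_nhds_subcover U hU
  have : ∀ᶠ m in atTop, ∀ x ∈ t, ∀ y ∈ U x, P m y :=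
    (Filter.eventually_all_finset t).2 fun x hx => hP x (htK x hx)
  filter_upwards [this] with m hm y hy
  obtain ⟨x, hx, hyx⟩ := mem_iUnion₂.1 (ht hy)
  exact hm x hx y hyx

lemma li_uniform {k : ℕ} {Km : ℕ → Set (E k)} {K C : Set (E k)} 
    (li : ∀ x ∈ K, ∀ ε > 0, ∀ᶠ m in atTop, ∃ y ∈ Km m, dist x y < ε)
    (hC : IsCompact C) (hCK : C ⊆ K) {ε : ℝ} (hε : 0 < ε) :
    ∀ᶠ m in atTop, ∀ x ∈ C, ∃ y ∈ Km m, dist x y < ε := by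
  refine compact_eventually hC fun x hx => ⟨ball x (ε / 2), ball_mem_nhds _ (by positivity), ?_⟩
  filter_upwards [li x (hCK hx) (ε / 2) (by positivity)] with m ⟨y, hy, hxy⟩ z hz
  refine ⟨y, hy, ?_⟩
  have := dist_triangle z x y
  rw [mem_ball] at hz
  linarith

/-- a point all of whose r-ball is within less than r of a closed convex set lies in it -/
lemma mem_of_near {k : ℕ} {C : Set (E k)} (hc : Convex ℝ C) (hcl : IsClosed C) {x : E k} {r : ℝ}
    (hr : 0 < r) (h : ∀ z ∈ closedBall x r, ∃ y ∈ C, dist z y < r) : x ∈ C := by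
  by_contra hx
  obtain ⟨f, s, hf, hs⟩ := geometric_hahn_banach_closed_point hc hcl hx
  set v := (InnerProductSpace.toDual ℝ (E k)).symm f with hv
  have hfv : ∀ y, f y = inner ℝ v y := fun y => by
    rw [hv, InnerProductSpace.toDual_symm_apply]
  have hv0 : v ≠ 0 := by
    intro h0
    obtain ⟨y, hy, -⟩ := h x (mem_closedBall_self hr.le)
    have h1 := hf y hy
    rw [hfv, h0, inner_zero_left] at h1
    rw [hfv, h0, inner_zero_left] at hs
    linarith
  have hn : 0 < ‖v‖ := norm_pos_iff.2 hv0
  obtain ⟨y, hy, hd⟩ := h (x + (r / ‖v‖) • v) (by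
    rw [mem_closedBall, dist_eq_norm, add_sub_cancel_left, norm_smul, Real.norm_eq_abs,
      abs_of_pos (by positivity)]
    field_simp; rfl)
  have h1 := hf y hy
  have h2 : inner ℝ v (x + (r / ‖v‖) • v - y) ≤ ‖v‖ * ‖x + (r / ‖v‖) • v - y‖ :=
    real_inner_le_norm _ _
  rw [inner_sub_right, inner_add_right, inner_smul_right, real_inner_self_eq_norm_sq,
    ← hfv, ← hfv, ← dist_eq_norm] at h2
  have h3 : r / ‖v‖ * ‖v‖ ^ 2 = ‖v‖ * r := by field_simp
  rw [h3] at h2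
  have h4 : ‖v‖ * dist (x + (r / ‖v‖) • v) y < ‖v‖ * r := by gcongr
  linarith

lemma ball_subset_eventually {k : ℕ} {Km : ℕ → Set (E k)} {K : Set (E k)}
    (hc : ∀ m, Convex ℝ (Km m)) (hcl : ∀ m, IsClosed (Km m))
    (li : ∀ x ∈ K, ∀ ε > 0, ∀ᶠ m in atTop, ∃ y ∈ Km m, dist x y < ε)
    {a : E k} (ha : a ∈ interior K) :
    ∃ r > 0, ∀ᶠ m in atTop, closedBall a r ⊆ Km m := by
  obtain ⟨R, hR, hb⟩ := Metric.nhds_basis_closedBall.mem_iff.1 (mem_interior_iff_mem_nhds.1 ha)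
  refine ⟨R / 2, by positivity, ?_⟩
  filter_upwards [li_uniform li (isCompact_closedBall a R) hb (half_pos hR)] with m hm x hx
  refine mem_of_near (hc m) (hcl m) (half_pos hR) fun z hz => hm z ?_
  rw [mem_closedBall] at *
  have := dist_triangle z x a
  linarith

lemma gauss_of_pk {k : ℕ} {Km : ℕ → Set (E k)} {K : Set (E k)}
    (hc : ∀ m, Convex ℝ (Km m)) (hcl : ∀ m, IsClosed (Km m))
    (hKc : Convex ℝ K) (hKcl : IsClosed K) (h : PKConv Km K) :
    Tendsto (fun m => dGauss (Km m) K) atTop (𝓝 0) := by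
  have key : Tendsto (fun m => gaussMeas k (symmDiff (Km m) K)) atTop (𝓝 (gaussMeas k ∅)) := by
    refine tendsto_measure_of_ae_tendsto_indicator_of_isFiniteMeasure atTop MeasurableSet.empty
      (fun m => (hcl m).measurableSet.symmDiff hKcl.measurableSet) ?_
    have h0 : gaussMeas k (frontier K) = 0 := gaussMeas_ac k (hKc.addHaar_frontier volume)
    have h1 : ∀ᵐ x ∂(gaussMeas k), x ∉ frontier K := measure_eq_zero_iff_ae_notMem.1 h0
    filter_upwards [h1] with x hx
    by_cases hxK : x ∈ K
    · have hxi : x ∈ interior K := by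
        by_contra hh
        exact hx ⟨subset_closure hxK, hh⟩
      obtain ⟨r, hr, hb⟩ := ball_subset_eventually hc hcl h.li hxi
      filter_upwards [hb] with m hm
      have := hm (mem_closedBall_self hr.le)
      simp [Set.mem_symmDiff, hxK, this]
    · obtain ⟨U, hU, hm⟩ := h.ls x hxK
      filter_upwards [hm] with m hm
      have := hm x (mem_of_mem_nhds hU)
      simp [Set.mem_symmDiff, hxK, this]
  rw [measure_empty] at key
  have := (ENNReal.tendsto_toReal ENNReal.zero_ne_top).comp key
  simpa [dGauss, Function.comp_def] using this

lemma eventually_gauss_lt {k : ℕ} {Km : ℕ → Set (E k)} {K : Set (E k)}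
    (h : Tendsto (fun m => dGauss (Km m) K) atTop (𝓝 0)) {U : Set (E k)} (hU : IsOpen U)
    (hne : U.Nonempty) : ∀ᶠ m in atTop, ¬ U ⊆ symmDiff (Km m) K := by
  have hpos : 0 < (gaussMeas k U).toReal :=
    ENNReal.toReal_pos (gaussMeas_pos hU hne).ne' (measure_ne_top _ _)
  filter_upwards [h.eventually_lt_const hpos] with m hm hsub
  have := ENNReal.toReal_mono (measure_ne_top (gaussMeas k) _) (measure_mono hsub)
  exact absurd hm (not_lt.2 this)

lemma pk_of_gauss {k : ℕ} {Km : ℕ → Set (E k)} {K : Set (E k)}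
    (hc : ∀ m, Convex ℝ (Km m)) (hcl : ∀ m, IsClosed (Km m))
    (hKc : Convex ℝ K) (hKcl : IsClosed K) (hKi : (interior K).Nonempty)
    (h : Tendsto (fun m => dGauss (Km m) K) atTop (𝓝 0)) : PKConv Km K := by
  have li : ∀ x ∈ K, ∀ ε > 0, ∀ᶠ m in atTop, ∃ y ∈ Km m, dist x y < ε := by
    intro x hx ε hε
    have hne : (ball x ε ∩ interior K).Nonempty := by
      have : x ∈ closure (interior K) := by
        rw [hKc.closure_interior_eq_closure_of_nonempty_interior hKi]
        exact subset_closure hx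
      exact mem_closure_iff.1 this _ isOpen_ball (mem_ball_self hε)
    filter_upwards [eventually_gauss_lt h (isOpen_ball.inter isOpen_interior) hne] with m hm
    by_contra! hcon
    refine hm fun y hy => Or.inr ⟨interior_subset hy.2, fun hyK => ?_⟩
    have := hcon y hyK
    have h2 := hy.1
    rw [mem_ball, dist_comm] at h2
    linarith
  refine ⟨li, fun x hx => ?_⟩
  obtain ⟨a, ha⟩ := hKi
  obtain ⟨r, hr, hb⟩ := ball_subset_eventually hc hcl li ha
  -- choose t small
  have hcont : Tendsto (fun t : ℝ => (1 - t) • x + t • a) (𝓝[>] 0) (𝓝 x) := by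
    have : Continuous (fun t : ℝ => (1 - t) • x + t • a) := by fun_prop
    have h2 := this.tendsto 0
    simp only [sub_zero, one_smul, zero_smul, add_zero] at h2
    exact h2.mono_left nhdsWithin_le_nhds
  have hev : ∀ᶠ t : ℝ in 𝓝[>] 0, (1 - t) • x + t • a ∈ Kᶜ :=
    hcont.eventually (hKcl.isOpen_compl.mem_nhds hx)
  have hlt : ∀ᶠ t : ℝ in 𝓝[>] 0, t < 1 :=
    nhdsWithin_le_nhds (Iio_mem_nhds one_pos)
  obtain ⟨t, ⟨hct, ht1⟩, ht0⟩ := ((hev.and hlt).and self_mem_nhdsWithin).exists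
  set c := (1 - t) • x + t • a with hcdef
  have hne : (ball c (t * r / 2) ∩ Kᶜ).Nonempty := ⟨c, mem_ball_self (by positivity), hct⟩
  refine ⟨ball x (t * r / 2), ball_mem_nhds _ (by positivity), ?_⟩
  filter_upwards [hb, eventually_gauss_lt h (isOpen_ball.inter hKcl.isOpen_compl) hne]
    with m hm hns y hy hyK
  refine hns fun p hp => Or.inl ⟨?_, hp.2⟩
  set b := t⁻¹ • (p - (1 - t) • y) with hbdef
  have hba : b ∈ closedBall a r := by
    have h1 : b - a = t⁻¹ • ((p - c) + (1 - t) • (x - y)) := by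
      rw [hbdef, hcdef]
      have : a = t⁻¹ • (t • a) := by rw [smul_smul, inv_mul_cancel₀ ht0.ne', one_smul]
      nth_rewrite 1 [this]
      rw [← smul_sub]
      congr 1
      simp only [smul_sub]
      abel
    have hp1 := hp.1
    rw [mem_ball, dist_eq_norm] at hp1
    rw [mem_ball, dist_comm, dist_eq_norm] at hy
    rw [mem_closedBall, dist_eq_norm, h1, norm_smul, norm_inv, Real.norm_eq_abs, abs_of_pos ht0]
    rw [inv_mul_le_iff₀ ht0]
    have h2 := norm_add_le (p - c) ((1 - t) • (x - y))
    have h3 : ‖(1 - t) • (x - y)‖ ≤ ‖x - y‖ := by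
      rw [norm_smul, Real.norm_eq_abs, abs_of_pos (by linarith)]
      nlinarith [norm_nonneg (x - y)]
    linarith
  have hpe : p = (1 - t) • y + t • b := by
    rw [hbdef, smul_smul, mul_inv_cancel₀ ht0.ne', one_smul]
    abel
  rw [hpe]
  exact hc m hyK (hm hba) (by linarith) ht0.le (by ring)

lemma eq_of_gauss_zero {k : ℕ} {K L : Set (E k)} (hKc : Convex ℝ K) (hKcl : IsClosed K)
    (hKi : (interior K).Nonempty) (hLcl : IsClosed L) (h : dGauss K L = 0) : K ⊆ L := by
  have h0 : gaussMeas k (symmDiff K L) = 0 := by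
    rcases (ENNReal.toReal_eq_zero_iff _).1 h with h | h
    · exact h
    · exact absurd h (measure_ne_top _ _)
  have hemp : ¬ (interior K ∩ Lᶜ).Nonempty := fun hne => by
    have h1 := gaussMeas_pos (isOpen_interior.inter hLcl.isOpen_compl) hne
    have h2 : gaussMeas k (interior K ∩ Lᶜ) ≤ gaussMeas k (symmDiff K L) :=
      measure_mono fun y hy => Or.inl ⟨interior_subset hy.1, hy.2⟩
    rw [h0] at h2
    exact absurd h1 (not_lt.2 h2)
  have hsub : interior K ⊆ L := fun y hy => by
    by_contra hyL
    exact hemp ⟨y, hy, hyL⟩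
  calc K ⊆ closure K := subset_closure
    _ = closure (interior K) := (hKc.closure_interior_eq_closure_of_nonempty_interior hKi).symm
    _ ⊆ L := closure_minimal hsub hLcl

lemma pk_iff_hausdorff {k : ℕ} {Km : ℕ → Set (E k)} {K : Set (E k)}
    (hm : ∀ m, IsCompact (Km m) ∧ Convex ℝ (Km m) ∧ (interior (Km m)).Nonempty)
    (hK : IsCompact K) (hne : K.Nonempty) :
    PKConv Km K ↔ Tendsto (fun m => hausdorffDist (Km m) K) atTop (𝓝 0) := by
  have hmne : ∀ m, (Km m).Nonempty := fun m => (hm m).2.2.mono interior_subset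
  constructor
  · intro h
    refine tendsto_order.2 ⟨fun a ha => Eventually.of_forall fun m =>
      ha.trans_le hausdorffDist_nonneg, fun ε hε => ?_⟩
    have hε2 : 0 < ε / 2 := half_pos hε
    -- boundary shell
    set S : Set (E k) := {x | infDist x K = ε / 2} with hS
    have hScl : IsClosed S := isClosed_eq (continuous_infDist_pt K) continuous_const
    have hSc : IsCompact S := by
      refine (hK.cthickening (r := ε / 2)).of_isClosed_subset hScl fun x hx => ?_
      rw [hK.cthickening_eq_biUnion_closedBall hε2.le]
      obtain ⟨y, hy, hxy⟩ := hK.exists_infDist_eq_dist hne x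
      refine mem_iUnion₂.2 ⟨y, hy, ?_⟩
      rw [mem_closedBall, ← hxy]
      exact le_of_eq hx
    have hS1 : ∀ᶠ m in atTop, ∀ y ∈ S, y ∉ Km m := by
      refine compact_eventually hSc fun x hx => h.ls x fun hxK => ?_
      have : infDist x K = ε / 2 := hx
      rw [infDist_zero_of_mem hxK] at this
      linarith
    have hL := li_uniform h.li hK subset_rfl hε2
    filter_upwards [hS1, hL] with m h1 h2
    refine lt_of_le_of_lt (hausdorffDist_le_of_mem_dist hε2.le ?_ ?_) (half_lt_self hε)
    · intro x hx
      obtain ⟨p, hp⟩ := hne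
      obtain ⟨q, hq, hpq⟩ := h2 p hp
      have hq' : infDist q K ≤ ε / 2 :=
        (infDist_le_dist_of_mem hp).trans (by rw [dist_comm]; exact hpq.le)
      have hx' : infDist x K ≤ ε / 2 := by
        by_contra! hcon
        obtain ⟨z, hz, hze⟩ := (hm m).2.1.isPreconnected.intermediate_value hq hx
          (continuous_infDist_pt K).continuousOn ⟨hq', hcon.le⟩
        exact h1 z hze hz
      obtain ⟨y, hy, hxy⟩ := hK.exists_infDist_eq_dist ⟨p, hp⟩ x
      exact ⟨y, hy, hxy ▸ hx'⟩
    · intro x hx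
      obtain ⟨y, hy, hxy⟩ := h2 x hx
      exact ⟨y, hy, hxy.le⟩
  · intro h
    have fin : ∀ m, hausdorffEDist (Km m) K ≠ ⊤ := fun m =>
      hausdorffEDist_ne_top_of_nonempty_of_bounded (hmne m) hne (hm m).1.isBounded hK.isBounded
    refine ⟨fun x hx ε hε => ?_, fun x hx => ?_⟩
    · filter_upwards [h.eventually_lt_const hε] with m hlt
      obtain ⟨y, hy, hxy⟩ := exists_dist_lt_of_hausdorffDist_lt' hx hlt (fin m)
      exact ⟨y, hy, by rwa [dist_comm]⟩
    · obtain ⟨ε, hε, hb⟩ := Metric.mem_nhds_iff.1 (hK.isClosed.isOpen_compl.mem_nhds hx)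
      refine ⟨ball x (ε / 2), ball_mem_nhds _ (half_pos hε), ?_⟩
      filter_upwards [h.eventually_lt_const (half_pos hε)] with m hlt y hy hyK
      obtain ⟨z, hz, hyz⟩ := exists_dist_lt_of_hausdorffDist_lt hyK hlt (fin m)
      refine hb (?_ : z ∈ ball x ε) hz
      rw [mem_ball] at *
      have := dist_triangle z y x
      rw [dist_comm z y] at this
      linarith

lemma continuous_fstE : Continuous (fstE : E (n + 1) → E n) := by
  unfold fstE
  refine (EuclideanSpace.equiv (Fin n) ℝ).symm.continuous.comp ?_
  refine continuous_pi fun i => ?_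
  have := (EuclideanSpace.equiv (Fin (n + 1)) ℝ).continuous
  exact (continuous_apply (Fin.castSucc i)).comp this

lemma continuous_sndE : Continuous (sndE : E (n + 1) → ℝ) := by
  unfold sndE
  fun_prop

lemma fstE_pairE (x : E n) (z : ℝ) : fstE (pairE x z) = x := by
  ext i
  simp [fstE, pairE, Fin.init]

lemma sndE_pairE (x : E n) (z : ℝ) : sndE (pairE x z) = z := by
  simp [sndE, pairE]

lemma pairE_fst_snd (X : E (n + 1)) : pairE (fstE X) (sndE X) = X := by
  ext i
  refine Fin.lastCases ?_ (fun j => ?_) i <;> simp [fstE, pairE, sndE, Fin.init]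

lemma continuous_pairE : Continuous (fun p : E n × ℝ => pairE p.1 p.2) := by
  unfold pairE
  refine (EuclideanSpace.equiv (Fin (n + 1)) ℝ).symm.continuous.comp ?_
  refine continuous_pi fun i => ?_
  refine Fin.lastCases ?_ (fun j => ?_) i
  · simpa using continuous_snd
  · simp only [Fin.snoc_castSucc]
    exact (continuous_apply j).comp ((EuclideanSpace.equiv (Fin n) ℝ).continuous.comp continuous_fst)

lemma mem_epiF (u : E n → EReal) (x : E n) (z : ℝ) : pairE x z ∈ epiF u ↔ u x ≤ (z : EReal) := by
  simp [epiF, fstE_pairE, sndE_pairE]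

lemma le_liminf_of_pk {um : ℕ → E n → EReal} {u : E n → EReal}
    (h : PKConv (fun m => epiF (um m)) (epiF u)) {x : E n} {xs : ℕ → E n}
    (hxs : Tendsto xs atTop (𝓝 x)) : u x ≤ Filter.liminf (fun m => um m (xs m)) atTop := by
  refine EReal.ge_of_forall_gt_iff_ge.1 fun z hz => ?_
  refine Filter.le_liminf_of_le (by isBoundedDefault) ?_
  have hX : pairE x z ∉ epiF u := by rw [mem_epiF]; exact not_le.2 hz
  obtain ⟨U, hU, hm⟩ := h.ls _ hX
  have hc : Tendsto (fun m => pairE (xs m) z) atTop (𝓝 (pairE x z)) :=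
    (continuous_pairE.tendsto (x, z)).comp (hxs.prodMk_nhds tendsto_const_nhds)
  filter_upwards [hm, hc.eventually hU] with m h1 h2
  have := h1 _ h2
  rw [mem_epiF, not_le] at this
  exact this.le

lemma epi_of_pk {um : ℕ → E n → EReal} {u : E n → EReal} (hbot : ∀ x, u x ≠ ⊥)
    (hcl : ∀ m, IsClosed (epiF (um m))) (hne : ∀ m, (epiF (um m)).Nonempty)
    (h : PKConv (fun m => epiF (um m)) (epiF u)) : EpiConverges um u := by
  intro x
  refine ⟨fun xs hxs => le_liminf_of_pk h hxs, ?_⟩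
  by_cases htop : u x = ⊤
  · refine ⟨fun _ => x, tendsto_const_nhds, ?_⟩
    have h1 := le_liminf_of_pk h (tendsto_const_nhds (x := x))
    rw [htop] at h1 ⊢
    exact tendsto_of_le_liminf_of_limsup_le h1 le_top
  · set z := (u x).toReal with hz
    have hzu : u x = (z : EReal) := (EReal.coe_toReal htop (hbot x)).symm
    have hX : pairE x z ∈ epiF u := by rw [mem_epiF, hzu]
    choose Y hY hYd using fun m => (hcl m).exists_infDist_eq_dist (hne m) (pairE x z)
    have hYt : Tendsto Y atTop (𝓝 (pairE x z)) := by
      refine Metric.tendsto_nhds.2 fun ε hε => ?_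
      filter_upwards [h.li _ hX ε hε] with m ⟨y, hy, hd⟩
      rw [dist_comm, ← hYd]
      exact (infDist_le_dist_of_mem hy).trans_lt hd
    have h1 : Tendsto (fun m => fstE (Y m)) atTop (𝓝 x) := by
      have := (continuous_fstE.tendsto (pairE x z)).comp hYt
      rwa [fstE_pairE] at this
    have h2 : Tendsto (fun m => sndE (Y m)) atTop (𝓝 z) := by
      have := (continuous_sndE.tendsto (pairE x z)).comp hYt
      rwa [sndE_pairE] at this
    refine ⟨fun m => fstE (Y m), h1, ?_⟩
    refine tendsto_of_le_liminf_of_limsup_le (le_liminf_of_pk h h1) ?_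
    have h3 : Tendsto (fun m => ((sndE (Y m) : ℝ) : EReal)) atTop (𝓝 (z : EReal)) :=
      (continuous_coe_real_ereal.tendsto z).comp h2
    rw [hzu, ← h3.limsup_eq]
    exact limsup_le_limsup (Eventually.of_forall fun m => hY m)

/-- sequential to neighbourhood form -/
lemma nhds_of_seq {P : ℕ → E n → Prop} {x : E n}
    (h : ∀ xs : ℕ → E n, Tendsto xs atTop (𝓝 x) → ∀ᶠ m in atTop, P m (xs m)) :
    ∃ ε > 0, ∀ᶠ m in atTop, ∀ y ∈ ball x ε, P m y := by
  by_contra! hcon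
  have hf : ∀ k : ℕ, ∃ᶠ m in atTop, ∃ y ∈ ball x (1 / ((k : ℝ) + 1)), ¬ P m y := fun k => by
    simpa using hcon (1 / ((k : ℝ) + 1)) (by positivity)
  obtain ⟨φ, hφ, hP⟩ := extraction_forall_of_frequently hf
  choose y hy hyP using hP
  let xs : ℕ → E n := fun m => if hm : ∃ k, φ k = m then y hm.choose else x
  have hxs : ∀ k, xs (φ k) = y k := fun k => by
    have hm : ∃ j, φ j = φ k := ⟨k, rfl⟩
    have : hm.choose = k := hφ.injective hm.choose_spec
    simp only [xs, dif_pos hm, this]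
  have ht : Tendsto xs atTop (𝓝 x) := by
    refine Metric.tendsto_atTop.2 fun ε hε => ?_
    obtain ⟨k0, hk0⟩ := exists_nat_one_div_lt hε
    refine ⟨φ k0, fun m hm => ?_⟩
    by_cases hk : ∃ k, φ k = m
    · obtain ⟨k, rfl⟩ := hk
      rw [hxs]
      have hkk : k0 ≤ k := hφ.le_iff_le.1 hm
      refine (mem_ball.1 (hy k)).trans_le ((Nat.one_div_le_one_div hkk).trans hk0.le)
    · simp only [xs, dif_neg hk, dist_self]
      exact hε
  obtain ⟨k, hk⟩ := (hφ.tendsto_atTop.eventually (h xs ht)).exists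
  rw [hxs] at hk
  exact hyP k hk

lemma pk_of_epi {um : ℕ → E n → EReal} {u : E n → EReal} (h : EpiConverges um u) :
    PKConv (fun m => epiF (um m)) (epiF u) := by
  refine ⟨fun X hX ε hε => ?_, fun X hX => ?_⟩
  · obtain ⟨xs, hxs, hu⟩ := (h (fstE X)).2
    have hX' : u (fstE X) ≤ ((sndE X : ℝ) : EReal) := hX
    have hcz : Tendsto (fun δ : ℝ => pairE (fstE X) (sndE X + δ)) (𝓝[>] 0) (𝓝 X) := by
      have hc : Continuous (fun δ : ℝ => pairE (fstE X) (sndE X + δ)) :=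
        continuous_pairE.comp (continuous_const.prodMk (continuous_const.add continuous_id))
      have h2 := hc.tendsto 0
      simp only [add_zero, pairE_fst_snd] at h2
      exact h2.mono_left nhdsWithin_le_nhds
    obtain ⟨δ, hδb, hδ⟩ :=
      ((hcz.eventually (ball_mem_nhds X hε)).and self_mem_nhdsWithin).exists
    have hc : Tendsto (fun m => pairE (xs m) (sndE X + δ)) atTop
        (𝓝 (pairE (fstE X) (sndE X + δ))) :=
      (continuous_pairE.tendsto (fstE X, sndE X + δ)).comp (hxs.prodMk_nhds tendsto_const_nhds)
    have hlt : u (fstE X) < ((sndE X + δ : ℝ) : EReal) :=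
      hX'.trans_lt (EReal.coe_lt_coe_iff.2 (by linarith))
    filter_upwards [hu.eventually_lt_const hlt,
      hc.eventually (isOpen_ball.mem_nhds hδb)] with m h1 h2
    refine ⟨_, (mem_epiF _ _ _).2 h1.le, ?_⟩
    rw [dist_comm]
    exact h2
  · have hX' : ((sndE X : ℝ) : EReal) < u (fstE X) := not_le.1 hX
    obtain ⟨z, hz1, hz2⟩ := EReal.lt_iff_exists_real_btwn.1 hX'
    obtain ⟨ε, hε, hev⟩ := nhds_of_seq (P := fun m y => (z : EReal) < um m y) (x := fstE X)
      fun xs hxs => eventually_lt_of_lt_liminf (hz2.trans_le ((h (fstE X)).1 xs hxs))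
    refine ⟨fstE ⁻¹' (ball (fstE X) ε) ∩ sndE ⁻¹' (Iio z), inter_mem
      (continuous_fstE.continuousAt (ball_mem_nhds _ hε))
      (continuous_sndE.continuousAt (Iio_mem_nhds (EReal.coe_lt_coe_iff.1 hz1))), ?_⟩
    filter_upwards [hev] with m hm Y hY hYK
    have h1 := hm _ hY.1
    have h2 : um m (fstE Y) ≤ ((sndE Y : ℝ) : EReal) := hYK
    have h3 : ((sndE Y : ℝ) : EReal) < z := EReal.coe_lt_coe_iff.2 hY.2
    exact absurd (h1.trans_le h2) (not_lt.2 h3.le)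

theorem statement_10 {n : ℕ} :
    (∀ K ∈ KPlus n, ∀ L ∈ KPlus n, (dGauss K L = 0 ↔ K = L)) ∧
    (∀ K ∈ KPlus n, ∀ L ∈ KPlus n, dGauss K L = dGauss L K) ∧
    (∀ K ∈ KPlus n, ∀ L ∈ KPlus n, ∀ J ∈ KPlus n, dGauss K J ≤ dGauss K L + dGauss L J) ∧
    (∀ (Km : ℕ → Set (E (n + 1))) (K : Set (E (n + 1))),
      (∀ m, IsCompact (Km m) ∧ Convex ℝ (Km m) ∧ (interior (Km m)).Nonempty) →
      IsCompact K → Convex ℝ K → (interior K).Nonempty →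
      (Tendsto (fun m => dGauss (Km m) K) atTop (𝓝 0) ↔
        Tendsto (fun m => hausdorffDist (Km m) K) atTop (𝓝 0))) ∧
    (∀ (um : ℕ → E n → EReal) (u : E n → EReal),
      (∀ m, IsConvCd (um m)) → IsConvCd u →
      (∀ m, epiF (um m) ∈ KPlus n) → epiF u ∈ KPlus n →
      (Tendsto (fun m => dGauss (epiF (um m)) (epiF u)) atTop (𝓝 0) ↔
        EpiConverges um u)) := by
  refine ⟨?_, ?_, ?_, ?_, ?_⟩
  · intro K hK L hL
    constructor
    · intro h
      refine Subset.antisymm (eq_of_gauss_zero hK.1 hK.2.1 hK.2.2.1 hL.2.1 h)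
        (eq_of_gauss_zero hL.1 hL.2.1 hL.2.2.1 hK.2.1 ?_)
      unfold dGauss at h ⊢
      rwa [symmDiff_comm]
    · rintro rfl
      simp [dGauss]
  · intro K _ L _
    unfold dGauss
    rw [symmDiff_comm]
  · intro K _ L _ J _
    unfold dGauss
    rw [← ENNReal.toReal_add (measure_ne_top _ _) (measure_ne_top _ _)]
    exact ENNReal.toReal_mono (ENNReal.add_ne_top.2 ⟨measure_ne_top _ _, measure_ne_top _ _⟩)
      (measure_symmDiff_le K L J)
  · intro Km K hm hK hKc hKi
    rw [← pk_iff_hausdorff hm hK (hKi.mono interior_subset)]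
    exact ⟨pk_of_gauss (fun m => (hm m).2.1) (fun m => (hm m).1.isClosed) hKc hK.isClosed hKi,
      gauss_of_pk (fun m => (hm m).2.1) (fun m => (hm m).1.isClosed) hKc hK.isClosed⟩
  · intro um u _ hu hmK hK
    constructor
    · intro h
      exact epi_of_pk hu.1.ne_bot (fun m => (hmK m).2.1)
        (fun m => (hmK m).2.2.1.mono interior_subset)
        (pk_of_gauss (fun m => (hmK m).1) (fun m => (hmK m).2.1) hK.1 hK.2.1 hK.2.2.1 h)
    · intro h
      exact gauss_of_pk (fun m => (hmK m).1) (fun m => (hmK m).2.1) hK.1 hK.2.1 (pk_of_epi h)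

end PaperJU

end
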